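/- arXiv:1304.7301 — 2 statements merged into one kernel-verified Lean document; each statement's English description precedes it below -/
import Mathlib

section
/- Supercritical percolation of empty paths: let the initial configuration λ_0 of the '1 Or 3' cellular automaton be i.i.d. fair bits on all of ℤ. Then with positive probability there exists an infinite sequence of space-time points (x_0,0), (x_1,1), (x_2,2), … with x_0 = 0, |x_{i+1} − x_i| ≤ 1 for all i, and λ(x_i, i) = 0 for all i. -/
open MeasureTheory

/-- Configurations of the one-dimensional CA: states in `ZMod 2` indexed by `ℤ`. -/
abbrev Config := ℤ → ZMod 2

/-- One step of the `1 Or 3` rule. -/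
def step (f : Config) : Config := fun x => f (x - 1) + f x + f (x + 1)

/-- Evolution of the `1 Or 3` rule. -/
def evol (f : Config) (t : ℕ) : Config := step^[t] f

/-- Single `1` at the origin. -/
def single : Config := fun x => if x = 0 then 1 else 0

/-- The random variables `X x`, `x ∈ K`, are i.i.d. fair bits under `μ`:
every finite cylinder event indexed inside `K` has the product probability. -/
def IIDFairOn {Ω : Type*} [MeasurableSpace Ω] (μ : Measure Ω)
    (X : Ω → Config) (K : Set ℤ) : Prop :=
  ∀ S : Finset ℤ, ↑S ⊆ K → ∀ v : ℤ → ZMod 2,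
    μ {ω | ∀ x ∈ S, X ω x = v x} = (2 : ENNReal)⁻¹ ^ S.card


namespace EmptyPaths

/-! ### Finite empty paths -/

/-- There is an empty path of length `n` starting from `x` at time `0`. -/
def Alive : ℕ → ℤ → Config → Prop
  | 0, x, f => f x = 0
  | n + 1, x, f => f x = 0 ∧ ∃ y : ℤ, |y - x| ≤ 1 ∧ Alive n y (step f)

lemma Alive.zero {n : ℕ} {x : ℤ} {f : Config} (h : Alive n x f) : f x = 0 := by
  cases n with
  | zero => exact h
  | succ n => exact h.1

lemma Alive.pred {n : ℕ} : ∀ {x : ℤ} {f : Config}, Alive (n + 1) x f → Alive n x f := by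
  induction n with
  | zero => intro x f h; exact h.1
  | succ n ih =>
    rintro x f ⟨h0, y, hy, h⟩
    exact ⟨h0, y, hy, ih h⟩

lemma Alive.mono {m n : ℕ} (hmn : m ≤ n) {x : ℤ} {f : Config} (h : Alive n x f) :
    Alive m x f := by
  induction n, hmn using Nat.le_induction with
  | base => exact h
  | succ n _ ih => exact ih h.pred

lemma exists_forall_alive (s : Finset ℤ) (f : Config) (h : ∀ n, ∃ x ∈ s, Alive n x f) :
    ∃ x ∈ s, ∀ n, Alive n x f := by
  by_contra! hc
  have : ∀ x, ∃ n, x ∈ s → ¬ Alive n x f := by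
    intro x
    by_cases hx : x ∈ s
    · obtain ⟨n, hn⟩ := hc x hx
      exact ⟨n, fun _ => hn⟩
    · exact ⟨0, fun h => absurd h hx⟩
  choose m hm using this
  obtain ⟨x, hx, hax⟩ := h (s.sup m)
  exact hm x hx (hax.mono (Finset.le_sup hx))

lemma exists_next (x : ℤ) (f : Config) (h : ∀ n, Alive n x f) :
    ∃ y : ℤ, |y - x| ≤ 1 ∧ ∀ n, Alive n y (step f) := by
  obtain ⟨y, hy, hn⟩ := exists_forall_alive (Finset.Icc (x - 1) (x + 1)) (step f) (by
    intro n
    obtain ⟨_, y, hy, hn⟩ := h (n + 1)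
    rw [abs_le] at hy
    exact ⟨y, by rw [Finset.mem_Icc]; omega, hn⟩)
  rw [Finset.mem_Icc] at hy
  exact ⟨y, by rw [abs_le]; omega, hn⟩

lemma exists_path (x : ℤ) (f : Config) (h : ∀ n, Alive n x f) :
    ∃ π : ℕ → ℤ, π 0 = x ∧ (∀ i : ℕ, |π (i + 1) - π i| ≤ 1) ∧
        ∀ i : ℕ, evol f i (π i) = 0 := by
  classical
  let S := {p : ℤ × Config // ∀ n, Alive n p.1 p.2}
  have key : ∀ p : S, ∃ q : S, |q.1.1 - p.1.1| ≤ 1 ∧ q.1.2 = step p.1.2 := by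
    rintro ⟨⟨x, f⟩, hp⟩
    obtain ⟨y, hy, hn⟩ := exists_next x f hp
    exact ⟨⟨⟨y, step f⟩, hn⟩, hy, rfl⟩
  choose nx h1 h2 using key
  let s : ℕ → S := fun i => nx^[i] ⟨⟨x, f⟩, h⟩
  have hs : ∀ i, s (i + 1) = nx (s i) := fun i => Function.iterate_succ_apply' _ _ _
  have hf : ∀ i, (s i).1.2 = evol f i := by
    intro i
    induction i with
    | zero => rfl
    | succ i ih => rw [hs, h2, ih, evol, evol, Function.iterate_succ_apply']
  refine ⟨fun i => (s i).1.1, rfl, fun i => ?_, fun i => ?_⟩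
  · show |(s (i+1)).1.1 - (s i).1.1| ≤ 1
    rw [hs]; exact h1 _
  · rw [← hf]; exact (s i).2 0

/-! ### Extremal ancestral lines -/

lemma first_ex (f : Config) : ∃ k : ℕ, f (k : ℤ) = 0 ∨ ∀ j : ℕ, f (j : ℤ) ≠ 0 := by
  by_cases h : ∃ k : ℕ, f (k : ℤ) = 0
  · exact h.imp fun _ => Or.inl
  · push Not at h
    exact ⟨0, Or.inr h⟩

open Classical in
/-- The first nonnegative empty site (`0` if there is none). -/
noncomputable def first (f : Config) : ℕ := Nat.find (first_ex f)

lemma first_spec (f : Config) (h : ∃ k : ℕ, f (k : ℤ) = 0) : f (first f) = 0 := by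
  classical
  rcases Nat.find_spec (first_ex f) with h1 | h1
  · exact h1
  · exact absurd h.choose_spec (h1 _)

lemma first_min (f : Config) (j : ℕ) (h : j < first f) : f j ≠ 0 := by
  classical
  intro h0
  exact Nat.find_min (first_ex f) h (Or.inl h0)

/-- The parent of `l` that is extremal in direction `d`. -/
def mv (d : ℤ) (f : Config) (l : ℤ) : ℤ :=
  if f (l + d) = 0 then l + d else if f l = 0 then l else l - d

/-- Position at time `0` of the extremal ancestral line in direction `d` which starts
from the first nonnegative empty site at time `n`. -/
noncomputable def W (d : ℤ) : ℕ → Config → ℤ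
  | 0, f => first f
  | n + 1, f => mv d f (W d n (step f))

lemma zmod_two (a : ZMod 2) : a = 0 ∨ a = 1 := by revert a; decide

lemma mv_abs {d : ℤ} (hd : d = 1 ∨ d = -1) (f : Config) (l : ℤ) : |mv d f l - l| ≤ 1 := by
  unfold mv
  rw [abs_le]
  split_ifs <;> omega

lemma mv_zero {d : ℤ} (hd : d = 1 ∨ d = -1) (f : Config) (l : ℤ) (h : step f l = 0) :
    f (mv d f l) = 0 := by
  unfold mv
  split_ifs with h1 h2
  · exact h1
  · exact h2
  · have e1 := (zmod_two (f (l + d))).resolve_left h1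
    have e2 := (zmod_two (f l)).resolve_left h2
    have h11 : (1 : ZMod 2) + 1 = 0 := by decide
    unfold step at h
    rcases hd with rfl | rfl
    · rw [e1, e2, add_assoc, h11, add_zero] at h; exact h
    · rw [← sub_eq_add_neg] at e1
      rw [e1, e2, h11, zero_add] at h
      simpa using h

lemma W_alive {d : ℤ} (hd : d = 1 ∨ d = -1) (n : ℕ) : ∀ f : Config,
    (∃ k : ℕ, step^[n] f (k : ℤ) = 0) → Alive n (W d n f) f := by
  induction n with
  | zero =>
    intro f h
    exact first_spec f h
  | succ n ih =>
    intro f h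
    have := ih (step f) h
    refine ⟨mv_zero hd f _ this.zero, W d n (step f), ?_, this⟩
    rw [abs_sub_comm]
    exact mv_abs hd f _

lemma alive_between (n : ℕ) : ∀ (f : Config) (x : ℤ),
    (∃ k : ℕ, step^[n + 1] f (k : ℤ) = 0) → W (-1) (n + 1) f ≤ x → x ≤ W 1 (n + 1) f →
    Alive n x f → Alive (n + 1) x f := by
  induction n with
  | zero =>
    intro f x hk hL hR hx
    have a1 : Alive 0 (W 1 0 (step f)) (step f) := W_alive (Or.inl rfl) 0 _ hk
    have b1 := mv_abs (Or.inl rfl) f (W 1 0 (step f))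
    have b2 := mv_abs (Or.inr rfl) f (W (-1) 0 (step f))
    have e : W (-1) 0 (step f) = W 1 0 (step f) := rfl
    have e1 : W 1 (0 + 1) f = mv 1 f (W 1 0 (step f)) := rfl
    have e2 : W (-1) (0 + 1) f = mv (-1) f (W (-1) 0 (step f)) := rfl
    refine ⟨hx, W 1 0 (step f), ?_, a1⟩
    rw [abs_le] at *
    omega
  | succ n ih =>
    rintro f x hk hL hR ⟨h0, y, hy, hay⟩
    have a1 := W_alive (d := 1) (Or.inl rfl) (n + 1) (step f) hk
    have a2 := W_alive (d := -1) (Or.inr rfl) (n + 1) (step f) hk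
    have b1 := mv_abs (Or.inl rfl) f (W 1 (n + 1) (step f))
    have b2 := mv_abs (Or.inr rfl) f (W (-1) (n + 1) (step f))
    have e1 : W 1 (n + 1 + 1) f = mv 1 f (W 1 (n + 1) (step f)) := rfl
    have e2 : W (-1) (n + 1 + 1) f = mv (-1) f (W (-1) (n + 1) (step f)) := rfl
    have ihy := ih (step f) y hk
    rw [e1] at hR
    rw [e2] at hL
    by_cases c1 : W (-1) (n + 1) (step f) ≤ y
    · by_cases c2 : y ≤ W 1 (n + 1) (step f)
      · exact ⟨h0, y, hy, ihy c1 c2 hay⟩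
      · refine ⟨h0, _, ?_, a1⟩
        rw [abs_le] at *
        omega
    · refine ⟨h0, _, ?_, a2⟩
      rw [abs_le] at *
      omega

/-- Deterministic statement: good events imply survival of a big interval. -/
lemma survive (N : ℕ) (f : Config) (hz : ∀ n, ∃ k : ℕ, step^[n] f (k : ℤ) = 0)
    (hL : ∀ n, W (-1) n f ≤ N) (hR : ∀ n, -(N : ℤ) ≤ W 1 n f) :
    ∃ x ∈ Finset.Icc (-(N : ℤ)) N, ∀ n, Alive n x f := by
  apply exists_forall_alive
  intro n
  induction n with
  | zero =>
    exact ⟨W (-1) 0 f, Finset.mem_Icc.2 ⟨hR 0, hL 0⟩, W_alive (Or.inr rfl) 0 f (hz 0)⟩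
  | succ n ih =>
    obtain ⟨x, hx, hax⟩ := ih
    by_cases c1 : -(N : ℤ) ≤ W (-1) (n + 1) f
    · exact ⟨_, Finset.mem_Icc.2 ⟨c1, hL _⟩, W_alive (Or.inr rfl) _ f (hz _)⟩
    by_cases c2 : W 1 (n + 1) f ≤ N
    · exact ⟨_, Finset.mem_Icc.2 ⟨hR _, c2⟩, W_alive (Or.inl rfl) _ f (hz _)⟩
    rw [Finset.mem_Icc] at hx
    exact ⟨x, Finset.mem_Icc.2 hx, alive_between n f x (hz _) (by omega) (by omega) hax⟩

/-! ### Fair measures -/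

/-- All cylinders have the product probability. -/
def Fair (ν : Measure Config) : Prop :=
  ∀ (S : Finset ℤ) (v : Config), ν {f | ∀ x ∈ S, f x = v x} = (2 : ENNReal)⁻¹ ^ S.card

lemma measurableSet_cyl (S : Finset ℤ) (v : Config) :
    MeasurableSet {f : Config | ∀ x ∈ S, f x = v x} := by
  have : {f : Config | ∀ x ∈ S, f x = v x} = ⋂ x ∈ S, {f | f x = v x} := by ext; simp
  rw [this]
  exact S.measurableSet_biInter fun x _ => measurable_pi_apply x (measurableSet_singleton _)

lemma Fair.ext {ν ν₂ : Measure Config} [IsProbabilityMeasure ν] [IsProbabilityMeasure ν₂]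
    (h : Fair ν) (h₂ : Fair ν₂) : ν = ν₂ := by
  classical
  refine ext_of_generate_finite
    {A | A = ∅ ∨ ∃ (S : Finset ℤ) (v : Config), A = {f | ∀ x ∈ S, f x = v x}} ?_ ?_ ?_ (by simp)
  · apply le_antisymm
    · refine iSup_le fun x => ?_
      rintro _ ⟨B, -, rfl⟩
      have : (fun f : Config => f x) ⁻¹' B = ⋃ a ∈ B, {f : Config | ∀ y ∈ ({x} : Finset ℤ), f y = a} := by
        ext f; simp
      rw [this]
      refine MeasurableSet.biUnion (Set.to_countable _) fun a _ => ?_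
      exact MeasurableSpace.measurableSet_generateFrom (Or.inr ⟨{x}, fun _ => a, rfl⟩)
    · apply MeasurableSpace.generateFrom_le
      rintro _ (rfl | ⟨S, v, rfl⟩)
      · exact MeasurableSet.empty
      · exact measurableSet_cyl S v
  · rintro _ (rfl | ⟨S, v, rfl⟩) _ (rfl | ⟨S₂, v₂, rfl⟩) hne
    · simp at hne
    · simp at hne
    · simp at hne
    · right
      obtain ⟨g, hg1, hg2⟩ := hne
      refine ⟨S ∪ S₂, g, ?_⟩
      ext f
      simp only [Set.mem_inter_iff, Set.mem_ofPred_eq, Finset.mem_union] at *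
      constructor
      · rintro ⟨a, b⟩ x (hx | hx)
        · rw [a x hx, hg1 x hx]
        · rw [b x hx, hg2 x hx]
      · intro a
        exact ⟨fun x hx => by rw [a x (Or.inl hx), hg1 x hx],
          fun x hx => by rw [a x (Or.inr hx), hg2 x hx]⟩
  · rintro _ (rfl | ⟨S, v, rfl⟩)
    · simp
    · rw [h, h₂]

lemma Fair.translate {ν : Measure Config} [IsProbabilityMeasure ν] (h : Fair ν) (g : Config) :
    MeasurePreserving (fun f => g + f) ν ν := by
  have hm : Measurable (fun f : Config => g + f) := measurable_const_add g
  refine ⟨hm, ?_⟩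
  have := Measure.isProbabilityMeasure_map (μ := ν) hm.aemeasurable
  refine Fair.ext (fun S v => ?_) h
  rw [Measure.map_apply hm (measurableSet_cyl S v), ← h S (fun x => v x - g x)]
  congr 1
  ext f
  simp only [Set.mem_preimage, Set.mem_ofPred_eq, Pi.add_apply]
  exact forall₂_congr fun x _ => by rw [eq_sub_iff_add_eq, add_comm]

lemma Fair.shift {ν : Measure Config} [IsProbabilityMeasure ν] (h : Fair ν) (a : ℤ) :
    MeasurePreserving (fun (f : Config) x => f (x + a)) ν ν := by
  classical
  have hm : Measurable (fun (f : Config) (x : ℤ) => f (x + a)) :=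
    measurable_pi_lambda _ fun x => measurable_pi_apply _
  refine ⟨hm, ?_⟩
  have := Measure.isProbabilityMeasure_map (μ := ν) hm.aemeasurable
  refine Fair.ext (fun S v => ?_) h
  rw [Measure.map_apply hm (measurableSet_cyl S v)]
  have := h (S.map (addRightEmbedding a)) (fun x => v (x - a))
  rw [Finset.card_map] at this
  rw [← this]
  congr 1
  ext f
  simp

lemma step_surjective : Function.Surjective step := by
  intro η
  let p : ℕ → ZMod 2 × ZMod 2 := fun n =>
    Nat.rec (0, 0) (fun n q => (q.2, η (n + 1) - q.1 - q.2)) n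
  let q : ℕ → ZMod 2 × ZMod 2 := fun n =>
    Nat.rec (0, 0) (fun n q => (η (-n) - q.1 - q.2, q.1)) n
  have hp : ∀ n, p (n + 1) = ((p n).2, η (n + 1) - (p n).1 - (p n).2) := fun n => rfl
  have hq : ∀ n, q (n + 1) = (η (-n) - (q n).1 - (q n).2, (q n).1) := fun n => rfl
  let ω : Config := fun x => if 0 ≤ x then (p x.toNat).1 else (q (-x).toNat).1
  have w1 : ∀ n : ℕ, ω n = (p n).1 := fun n => by simp [ω]
  have w2 : ∀ n : ℕ, ω (-n) = (q n).1 := fun n => by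
    rcases n with _ | n
    · rfl
    · have : ¬ (0 : ℤ) ≤ -((n + 1 : ℕ) : ℤ) := by omega
      simp only [ω, if_neg this, neg_neg, Int.toNat_natCast]
  refine ⟨ω, funext fun x => ?_⟩
  show ω (x - 1) + ω x + ω (x + 1) = η x
  rcases lt_trichotomy x 0 with hx | rfl | hx
  · obtain ⟨n, rfl⟩ : ∃ n : ℕ, x = -((n + 1 : ℕ) : ℤ) := ⟨(-x - 1).toNat, by omega⟩
    have e1 : -((n + 1 : ℕ) : ℤ) - 1 = -((n + 2 : ℕ) : ℤ) := by push_cast; ring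
    have e2 : -((n + 1 : ℕ) : ℤ) + 1 = -(n : ℤ) := by push_cast; ring
    rw [e1, e2, w2, w2, w2, hq (n + 1), hq n]
    simp
    ring
  · have e0 : ω 0 = 0 := w1 0
    have e1 : ω (-1) = η 0 := by simpa [q] using w2 1
    have e2 : ω 1 = 0 := by simpa [p] using w1 1
    simp [e0, e1, e2]
  · obtain ⟨n, rfl⟩ : ∃ n : ℕ, x = ((n + 1 : ℕ) : ℤ) := ⟨(x - 1).toNat, by omega⟩
    have e1 : ((n + 1 : ℕ) : ℤ) - 1 = (n : ℤ) := by push_cast; ring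
    have e2 : ((n + 1 : ℕ) : ℤ) + 1 = ((n + 2 : ℕ) : ℤ) := by push_cast; ring
    rw [e1, e2, w1, w1, w1, hp (n + 1), hp n]
    simp

lemma step_add (f g : Config) : step (f + g) = step f + step g := by
  funext x
  simp only [step, Pi.add_apply]
  ring

/-- `step` as a homomorphism. -/
def stepHom : Config →+ Config where
  toFun := step
  map_zero' := by funext x; simp [step]
  map_add' := step_add

lemma continuous_step : Continuous step := by
  unfold step
  fun_prop

lemma Fair.step {ν : Measure Config} [IsProbabilityMeasure ν] (h : Fair ν) :
    MeasurePreserving step ν ν := by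
  have : ν.IsAddLeftInvariant := ⟨fun g => (h.translate g).map_eq⟩
  have : ν.IsAddHaarMeasure :=
    Measure.isAddHaarMeasure_of_isCompact_nonempty_interior ν Set.univ isCompact_univ
      (by simp) (by simp) (by simp)
  exact AddMonoidHom.measurePreserving (f := stepHom) continuous_step step_surjective rfl

/-! ### Measurability -/

lemma measurable_step : Measurable step := continuous_step.measurable

lemma measurableSet_alive (n : ℕ) : ∀ x, MeasurableSet {f | Alive n x f} := by
  induction n with
  | zero => intro x; exact measurable_pi_apply x (measurableSet_singleton 0)
  | succ n ih =>
    intro x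
    have : {f | Alive (n + 1) x f} = {f : Config | f x = 0} ∩
        ⋃ (y : ℤ) (_ : |y - x| ≤ 1), step ⁻¹' {f | Alive n y f} := by
      ext f
      simp [Alive]
    rw [this]
    refine MeasurableSet.inter (measurable_pi_apply x (measurableSet_singleton 0)) ?_
    exact MeasurableSet.iUnion fun y => MeasurableSet.iUnion fun _ => measurable_step (ih y)

lemma measurable_first : Measurable first := by
  classical
  unfold first
  refine measurable_find (p := fun (f : Config) (k : ℕ) => f (k : ℤ) = 0 ∨ ∀ j : ℕ, f (j : ℤ) ≠ 0)
    first_ex fun k => ?_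
  have h : ∀ k : ℕ, MeasurableSet {f : Config | f (k : ℤ) = 0} :=
    fun k => measurable_pi_apply (k : ℤ) (measurableSet_singleton 0)
  have : {f : Config | f (k : ℤ) = 0 ∨ ∀ j : ℕ, f (j : ℤ) ≠ 0} =
      {f : Config | f (k : ℤ) = 0} ∪ ⋂ j : ℕ, {f : Config | f (j : ℤ) = 0}ᶜ := by
    ext f; simp
  rw [this]
  exact (h k).union (MeasurableSet.iInter fun j => (h j).compl)

lemma measurable_eval : Measurable (fun p : Config × ℤ => p.1 p.2) :=
  measurable_from_prod_countable_left fun y => measurable_pi_apply y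

lemma measurable_mv (d : ℤ) {V : Config → ℤ} (hV : Measurable V) :
    Measurable (fun f => mv d f (V f)) := by
  have h : ∀ e : ℤ, MeasurableSet {f : Config | f (V f + e) = 0} := by
    intro e
    have : Measurable (fun f : Config => f (V f + e)) :=
      measurable_eval.comp (measurable_id.prodMk (hV.add_const e))
    exact this (measurableSet_singleton 0)
  have h0 := h 0
  simp only [add_zero] at h0
  exact Measurable.ite (h d) (hV.add_const d) (Measurable.ite h0 hV (hV.sub_const d))

lemma measurable_W (d : ℤ) (n : ℕ) : Measurable (W d n) := by
  induction n with
  | zero => exact (measurable_of_countable (fun k : ℕ => (k : ℤ))).comp measurable_first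
  | succ n ih => exact measurable_mv d (ih.comp measurable_step)

/-! ### Exponential moments -/

/-- Exponential weight. -/
noncomputable def w (z : ℤ) : ENNReal := ENNReal.ofReal ((3 / 2 : ℝ) ^ z)

lemma measurable_w : Measurable w := measurable_of_countable _

/-- Nonzero kernel elements of `step`. -/
def ker (j : ℤ) : Config := fun x => if (x + j) % 3 = 0 then 0 else 1

lemma step_ker (j : ℤ) : step (ker j) = 0 := by
  have h11 : (1 : ZMod 2) + 1 = 0 := by decide
  funext x
  simp only [step, ker, Pi.zero_apply]
  have : (x + j) % 3 = 0 ∨ (x + j) % 3 = 1 ∨ (x + j) % 3 = 2 := by omega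
  rcases this with h | h | h
  · rw [if_neg (by omega), if_pos (by omega), if_neg (by omega)]; simpa using h11
  · rw [if_pos (by omega), if_neg (by omega), if_neg (by omega)]; simpa using h11
  · rw [if_neg (by omega), if_neg (by omega), if_pos (by omega)]; simpa using h11

/-- One step factor. -/
noncomputable def c (a b : ZMod 2) : ℝ := if a = 0 then 2 / 3 else if b = 0 then 1 else 3 / 2

lemma c_nonneg (a b : ZMod 2) : 0 ≤ c a b := by
  unfold c; split_ifs <;> norm_num

lemma c_sum (a b : ZMod 2) :
    c a b + c (1 + a) b + c a (1 + b) + c (1 + a) (1 + b) = 4 * (23 / 24) := by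
  have h11 : (1 : ZMod 2) + 1 = 0 := by decide
  have h10 : (1 : ZMod 2) ≠ 0 := by decide
  rcases zmod_two a with rfl | rfl <;> rcases zmod_two b with rfl | rfl <;>
    simp [c, h11] <;> norm_num

lemma w_mv {d : ℤ} (hd : d = 1 ∨ d = -1) (f : Config) (l : ℤ) :
    w (-d * mv d f l) = ENNReal.ofReal ((3 / 2 : ℝ) ^ (-d * l) * c (f (l + d)) (f l)) := by
  have h0 : (3 / 2 : ℝ) ≠ 0 := by norm_num
  have hdd : d * d = 1 := by rcases hd with rfl | rfl <;> norm_num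
  unfold w mv c
  congr 1
  split_ifs
  · have : -d * (l + d) = -d * l + (-1) := by linear_combination -hdd
    rw [this, zpow_add₀ h0]; norm_num
  · rw [mul_one]
  · have : -d * (l - d) = -d * l + 1 := by linear_combination hdd
    rw [this, zpow_add₀ h0]; norm_num

lemma c_ker_sum {d : ℤ} (hd : d = 1 ∨ d = -1) (f : Config) (l : ℤ) :
    c (f (l + d)) (f l) + c ((ker 0 + f) (l + d)) ((ker 0 + f) l)
      + c ((ker 1 + f) (l + d)) ((ker 1 + f) l) + c ((ker 2 + f) (l + d)) ((ker 2 + f) l)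
      = 4 * (23 / 24) := by
  rw [← c_sum (f (l + d)) (f l)]
  simp only [Pi.add_apply, ker]
  have : l % 3 = 0 ∨ l % 3 = 1 ∨ l % 3 = 2 := by omega
  have key : ∀ j : ℤ, ∀ y : ℤ, (if (y + j) % 3 = 0 then (0 : ZMod 2) else 1)
    = if (y + j) % 3 = 0 then 0 else 1 := fun _ _ => rfl
  rcases hd with rfl | rfl
  · rcases this with h | h | h
    · rw [if_neg (show ¬ (l + 1 + 0) % 3 = 0 by omega), if_pos (show (l + 0) % 3 = 0 by omega),
        if_neg (show ¬ (l + 1 + 1) % 3 = 0 by omega), if_neg (show ¬ (l + 1) % 3 = 0 by omega),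
        if_pos (show (l + 1 + 2) % 3 = 0 by omega), if_neg (show ¬ (l + 2) % 3 = 0 by omega)]
      simp only [zero_add]; ring
    · rw [if_neg (show ¬ (l + 1 + 0) % 3 = 0 by omega), if_neg (show ¬ (l + 0) % 3 = 0 by omega),
        if_pos (show (l + 1 + 1) % 3 = 0 by omega), if_neg (show ¬ (l + 1) % 3 = 0 by omega),
        if_neg (show ¬ (l + 1 + 2) % 3 = 0 by omega), if_pos (show (l + 2) % 3 = 0 by omega)]
      simp only [zero_add]; ring
    · rw [if_pos (show (l + 1 + 0) % 3 = 0 by omega), if_neg (show ¬ (l + 0) % 3 = 0 by omega),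
        if_neg (show ¬ (l + 1 + 1) % 3 = 0 by omega), if_pos (show (l + 1) % 3 = 0 by omega),
        if_neg (show ¬ (l + 1 + 2) % 3 = 0 by omega), if_neg (show ¬ (l + 2) % 3 = 0 by omega)]
      simp only [zero_add]; ring
  · rcases this with h | h | h
    · rw [if_neg (show ¬ (l + -1 + 0) % 3 = 0 by omega), if_pos (show (l + 0) % 3 = 0 by omega),
        if_pos (show (l + -1 + 1) % 3 = 0 by omega), if_neg (show ¬ (l + 1) % 3 = 0 by omega),
        if_neg (show ¬ (l + -1 + 2) % 3 = 0 by omega), if_neg (show ¬ (l + 2) % 3 = 0 by omega)]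
      simp only [zero_add]
    · rw [if_pos (show (l + -1 + 0) % 3 = 0 by omega), if_neg (show ¬ (l + 0) % 3 = 0 by omega),
        if_neg (show ¬ (l + -1 + 1) % 3 = 0 by omega), if_neg (show ¬ (l + 1) % 3 = 0 by omega),
        if_neg (show ¬ (l + -1 + 2) % 3 = 0 by omega), if_pos (show (l + 2) % 3 = 0 by omega)]
      simp only [zero_add]; ring
    · rw [if_neg (show ¬ (l + -1 + 0) % 3 = 0 by omega), if_neg (show ¬ (l + 0) % 3 = 0 by omega),
        if_neg (show ¬ (l + -1 + 1) % 3 = 0 by omega), if_pos (show (l + 1) % 3 = 0 by omega),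
        if_pos (show (l + -1 + 2) % 3 = 0 by omega), if_neg (show ¬ (l + 2) % 3 = 0 by omega)]
      simp only [zero_add]; ring

lemma w_mv_sum {d : ℤ} (hd : d = 1 ∨ d = -1) (f : Config) (l : ℤ) :
    w (-d * mv d f l) + w (-d * mv d (ker 0 + f) l) + w (-d * mv d (ker 1 + f) l)
      + w (-d * mv d (ker 2 + f) l) = 4 * (ENNReal.ofReal (23 / 24) * w (-d * l)) := by
  have hp : (0 : ℝ) ≤ (3 / 2 : ℝ) ^ (-d * l) := by positivity
  have hq : ∀ a b, 0 ≤ (3 / 2 : ℝ) ^ (-d * l) * c a b := fun a b => mul_nonneg hp (c_nonneg a b)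
  simp only [w_mv hd]
  rw [← ENNReal.ofReal_add (hq _ _) (hq _ _), ← ENNReal.ofReal_add (add_nonneg (hq _ _) (hq _ _)) (hq _ _),
    ← ENNReal.ofReal_add (add_nonneg (add_nonneg (hq _ _) (hq _ _)) (hq _ _)) (hq _ _), ← mul_add, ← mul_add, ← mul_add, c_ker_sum hd]
  have h4 : (4 : ENNReal) = ENNReal.ofReal 4 := by norm_num
  rw [w, h4, ← ENNReal.ofReal_mul (by norm_num), ← ENNReal.ofReal_mul (by norm_num)]
  congr 1
  ring

lemma moment_succ {ν : Measure Config} [IsProbabilityMeasure ν] (h : Fair ν) {d : ℤ}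
    (hd : d = 1 ∨ d = -1) (n : ℕ) :
    ∫⁻ f, w (-d * W d (n + 1) f) ∂ν = ENNReal.ofReal (23 / 24) * ∫⁻ f, w (-d * W d n f) ∂ν := by
  have hm : ∀ n, Measurable fun f => w (-d * W d n f) := fun n =>
    measurable_w.comp ((measurable_W d n).const_mul (-d))
  have hk : ∀ j, ∫⁻ f, w (-d * mv d (ker j + f) (W d n (step f))) ∂ν
      = ∫⁻ f, w (-d * W d (n + 1) f) ∂ν := by
    intro j
    rw [← (h.translate (ker j)).lintegral_comp (hm (n + 1))]
    refine lintegral_congr fun f => ?_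
    show _ = w (-d * mv d (ker j + f) (W d n (step (ker j + f))))
    rw [step_add, step_ker, zero_add]
  have hkm : ∀ j, Measurable fun f => w (-d * mv d (ker j + f) (W d n (step f))) := by
    intro j
    have := (hm (n + 1)).comp (measurable_const_add (ker j))
    convert this using 1
    funext f
    symm
    show w (-d * mv d (ker j + f) (W d n (step (ker j + f)))) = _
    rw [step_add, step_ker, zero_add]
  have h0m : Measurable fun f => w (-d * mv d f (W d n (step f))) := hm (n + 1)
  have hsum : ∫⁻ f, (w (-d * mv d f (W d n (step f))) + w (-d * mv d (ker 0 + f) (W d n (step f)))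
      + w (-d * mv d (ker 1 + f) (W d n (step f)))
      + w (-d * mv d (ker 2 + f) (W d n (step f)))) ∂ν
      = 4 * ∫⁻ f, w (-d * W d (n + 1) f) ∂ν := by
    rw [lintegral_add_right _ (hkm 2), lintegral_add_right _ (hkm 1), lintegral_add_right _ (hkm 0),
      hk, hk, hk]
    show ∫⁻ f, w (-d * W d (n + 1) f) ∂ν + _ + _ + _ = _
    ring
  simp only [w_mv_sum hd] at hsum
  have hm' : Measurable fun f => w (-d * W d n (step f)) := (hm n).comp measurable_step
  rw [lintegral_const_mul _ (hm'.const_mul _), lintegral_const_mul _ hm',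
    h.step.lintegral_comp (hm n)] at hsum
  exact ((ENNReal.mul_right_inj (by norm_num) (by norm_num)).1 hsum).symm

lemma fair_ones {ν : Measure Config} (h : Fair ν) (k : ℕ) :
    ν {f | ∀ j : ℕ, j < k → f (j : ℤ) ≠ 0} = (2 : ENNReal)⁻¹ ^ k := by
  have := h ((Finset.range k).map Nat.castEmbedding) (fun _ => 1)
  rw [Finset.card_map, Finset.card_range] at this
  rw [← this]
  congr 1
  ext f
  simp only [Set.mem_ofPred_eq, Finset.mem_map, Finset.mem_range, Nat.castEmbedding_apply,
    forall_exists_index, and_imp, forall_apply_eq_imp_iff₂]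
  refine forall₂_congr fun j _ => ?_
  rcases zmod_two (f j) with e | e <;> simp [e]

lemma measurableSet_ones (k : ℕ) : MeasurableSet {f : Config | ∀ j : ℕ, j < k → f (j : ℤ) ≠ 0} := by
  have : {f : Config | ∀ j : ℕ, j < k → f (j : ℤ) ≠ 0} =
      ⋂ (j : ℕ) (_ : j < k), {f : Config | f (j : ℤ) = 0}ᶜ := by
    ext f; simp
  rw [this]
  exact MeasurableSet.iInter fun j => MeasurableSet.iInter fun _ =>
    (measurable_pi_apply (j : ℤ) (measurableSet_singleton 0)).compl

lemma w_mono {a b : ℤ} (h : a ≤ b) : w a ≤ w b :=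
  ENNReal.ofReal_le_ofReal (zpow_le_zpow_right₀ (by norm_num) h)

lemma moment_zero {ν : Measure Config} [IsProbabilityMeasure ν] (h : Fair ν) {d : ℤ}
    (hd : d = 1 ∨ d = -1) : ∫⁻ f, w (-d * W d 0 f) ∂ν ≤ ENNReal.ofReal 4 := by
  have hpt : ∀ f : Config, w (-d * W d 0 f) ≤ ∑' k : ℕ,
      Set.indicator {f : Config | ∀ j : ℕ, j < k → f (j : ℤ) ≠ 0} (fun _ => w k) f := by
    intro f
    refine le_trans ?_ (ENNReal.le_tsum (first f))
    rw [Set.indicator_of_mem (by exact fun j hj => first_min f j hj)]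
    apply w_mono
    show -d * (first f : ℤ) ≤ first f
    rcases hd with rfl | rfl <;> omega
  refine (lintegral_mono hpt).trans ?_
  rw [lintegral_tsum fun k => (measurable_const.indicator (measurableSet_ones k)).aemeasurable]
  have : ∀ k : ℕ, ∫⁻ f, Set.indicator {f : Config | ∀ j : ℕ, j < k → f (j : ℤ) ≠ 0}
      (fun _ => w k) f ∂ν = ENNReal.ofReal ((3 / 4 : ℝ) ^ k) := by
    intro k
    rw [lintegral_indicator_const (measurableSet_ones k), fair_ones h, w]
    have h2 : (2 : ENNReal)⁻¹ = ENNReal.ofReal (1 / 2) := by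
      rw [ENNReal.ofReal_div_of_pos (by norm_num)]; simp
    rw [h2, ← ENNReal.ofReal_pow (by norm_num), ← ENNReal.ofReal_mul (by positivity),
      zpow_natCast, ← mul_pow]
    norm_num
  simp only [this]
  rw [← ENNReal.ofReal_tsum_of_nonneg (fun k => by positivity)
    (summable_geometric_of_lt_one (by norm_num) (by norm_num)),
    tsum_geometric_of_lt_one (by norm_num) (by norm_num)]
  norm_num

lemma moment {ν : Measure Config} [IsProbabilityMeasure ν] (h : Fair ν) {d : ℤ}
    (hd : d = 1 ∨ d = -1) (n : ℕ) :
    ∫⁻ f, w (-d * W d n f) ∂ν ≤ ENNReal.ofReal (4 * (23 / 24) ^ n) := by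
  induction n with
  | zero => simpa using moment_zero h hd
  | succ n ih =>
    rw [moment_succ h hd]
    refine (mul_le_mul_right ih _).trans ?_
    rw [← ENNReal.ofReal_mul (by norm_num)]
    apply ENNReal.ofReal_le_ofReal
    rw [pow_succ]
    apply le_of_eq
    ring

lemma tail {ν : Measure Config} [IsProbabilityMeasure ν] (h : Fair ν) {d : ℤ}
    (hd : d = 1 ∨ d = -1) (n : ℕ) :
    ν {f | (14 : ℤ) < -d * W d n f} ≤ ENNReal.ofReal (4 / 400 * (23 / 24) ^ n) := by
  have hm : Measurable fun f => w (-d * W d n f) :=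
    measurable_w.comp ((measurable_W d n).const_mul (-d))
  have h1 := mul_meas_ge_le_lintegral (μ := ν) hm (ENNReal.ofReal 400)
  have h2 : {f | (14 : ℤ) < -d * W d n f} ⊆ {f | ENNReal.ofReal 400 ≤ w (-d * W d n f)} := by
    intro f hf
    have hf : (15 : ℤ) ≤ -d * W d n f := hf
    refine le_trans ?_ (w_mono hf)
    apply ENNReal.ofReal_le_ofReal
    norm_num
  have h3 : ENNReal.ofReal 400 * ν {f | (14 : ℤ) < -d * W d n f}
      ≤ ENNReal.ofReal 400 * ENNReal.ofReal (4 / 400 * (23 / 24) ^ n) := by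
    refine (mul_le_mul_right (measure_mono h2) _).trans (h1.trans ((moment h hd n).trans ?_))
    rw [← ENNReal.ofReal_mul (by norm_num)]
    apply ENNReal.ofReal_le_ofReal
    apply le_of_eq
    ring
  exact (ENNReal.mul_le_mul_iff_right (by norm_num) (by norm_num)).1 h3

lemma no_zero {ν : Measure Config} [IsProbabilityMeasure ν] (h : Fair ν) (n : ℕ) :
    ν {f | ¬ ∃ k : ℕ, step^[n] f (k : ℤ) = 0} = 0 := by
  have hk : ∀ k : ℕ, ν {f | ¬ ∃ k : ℕ, step^[n] f (k : ℤ) = 0} ≤ (2 : ENNReal)⁻¹ ^ k := by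
    intro k
    rw [← fair_ones h k, ← (h.step.iterate n).measure_preimage (measurableSet_ones k).nullMeasurableSet]
    apply measure_mono
    intro f hf j _ h0
    exact hf ⟨j, h0⟩
  have ht := ENNReal.tendsto_pow_atTop_nhds_zero_of_lt_one (r := (2 : ENNReal)⁻¹) (by simp)
  exact le_antisymm (ge_of_tendsto' ht hk) zero_le

lemma bad_small {ν : Measure Config} [IsProbabilityMeasure ν] (h : Fair ν) :
    ν {f | ¬ ((∀ n, ∃ k : ℕ, step^[n] f (k : ℤ) = 0) ∧ (∀ n, W (-1) n f ≤ (14 : ℕ)) ∧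
      ∀ n, -((14 : ℕ) : ℤ) ≤ W 1 n f)} < 1 := by
  have hsub : {f | ¬ ((∀ n, ∃ k : ℕ, step^[n] f (k : ℤ) = 0) ∧ (∀ n, W (-1) n f ≤ (14 : ℕ)) ∧
      ∀ n, -((14 : ℕ) : ℤ) ≤ W 1 n f)} ⊆ ⋃ n, ({f | ¬ ∃ k : ℕ, step^[n] f (k : ℤ) = 0} ∪
        ({f | (14 : ℤ) < -(-1) * W (-1) n f} ∪ {f | (14 : ℤ) < -1 * W 1 n f})) := by
    intro f hf
    rw [Set.mem_iUnion]
    by_contra hc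
    apply hf
    rw [not_exists] at hc
    refine ⟨fun n => ?_, fun n => ?_, fun n => ?_⟩
    · by_contra hn
      exact hc n (Or.inl hn)
    · by_contra hn
      refine hc n (Or.inr (Or.inl ?_))
      show (14 : ℤ) < -(-1) * W (-1) n f
      push_cast at hn
      omega
    · by_contra hn
      refine hc n (Or.inr (Or.inr ?_))
      show (14 : ℤ) < -1 * W 1 n f
      push_cast at hn
      omega
  have hn : ∀ n, ν ({f | ¬ ∃ k : ℕ, step^[n] f (k : ℤ) = 0} ∪
        ({f | (14 : ℤ) < -(-1) * W (-1) n f} ∪ {f | (14 : ℤ) < -1 * W 1 n f}))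
      ≤ ENNReal.ofReal (8 / 400 * (23 / 24) ^ n) := by
    intro n
    refine (measure_union_le _ _).trans ?_
    rw [no_zero h, zero_add]
    refine (measure_union_le _ _).trans ?_
    refine (add_le_add (tail h (Or.inr rfl) n) (tail h (Or.inl rfl) n)).trans ?_
    rw [← ENNReal.ofReal_add (by positivity) (by positivity)]
    apply ENNReal.ofReal_le_ofReal
    apply le_of_eq
    ring
  calc _ ≤ _ := measure_mono hsub
    _ ≤ _ := measure_iUnion_le _
    _ ≤ ∑' n : ℕ, ENNReal.ofReal (8 / 400 * (23 / 24) ^ n) := ENNReal.tsum_le_tsum hn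
    _ = ENNReal.ofReal (8 / 400 * 24) := by
      rw [← ENNReal.ofReal_tsum_of_nonneg (fun k => by positivity)
        ((summable_geometric_of_lt_one (by norm_num) (by norm_num)).mul_left _), tsum_mul_left,
        tsum_geometric_of_lt_one (by norm_num) (by norm_num)]
      norm_num
    _ < 1 := by
      rw [ENNReal.ofReal_lt_one]
      norm_num

lemma alive_shift (a : ℤ) (n : ℕ) : ∀ (x : ℤ) (f : Config),
    Alive n (x + a) f → Alive n x (fun y => f (y + a)) := by
  induction n with
  | zero => intro x f h; exact h
  | succ n ih =>
    rintro x f ⟨h0, y, hy, hn⟩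
    refine ⟨h0, y - a, by rw [show y - a - x = y - (x + a) by ring]; exact hy, ?_⟩
    have := ih (y - a) (step f) (by rwa [sub_add_cancel])
    convert this using 1
    funext z
    simp only [step]
    rw [show z - 1 + a = z + a - 1 by ring, show z + 1 + a = z + a + 1 by ring]

lemma measurableSet_forall_alive (x : ℤ) : MeasurableSet {f | ∀ n, Alive n x f} := by
  have : {f | ∀ n, Alive n x f} = ⋂ n, {f | Alive n x f} := by ext f; simp
  rw [this]
  exact MeasurableSet.iInter fun n => measurableSet_alive n x

lemma fair_pos {ν : Measure Config} [IsProbabilityMeasure ν] (h : Fair ν) :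
    0 < ν {f | ∀ n, Alive n 0 f} := by
  by_contra hc
  have h0 : ν {f | ∀ n, Alive n 0 f} = 0 := by simpa using hc
  have hx : ∀ x : ℤ, ν {f | ∀ n, Alive n x f} = 0 := by
    intro x
    have := (h.shift x).measure_preimage (measurableSet_forall_alive 0).nullMeasurableSet
    rw [h0] at this
    refine measure_mono_null ?_ this
    intro f hf n
    exact alive_shift x n 0 f (by rw [zero_add]; exact hf n)
  have hU : ν (⋃ x : ℤ, {f | ∀ n, Alive n x f}) = 0 := measure_iUnion_null hx
  have huniv : (Set.univ : Set Config) ⊆ {f | ¬ ((∀ n, ∃ k : ℕ, step^[n] f (k : ℤ) = 0) ∧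
      (∀ n, W (-1) n f ≤ (14 : ℕ)) ∧ ∀ n, -((14 : ℕ) : ℤ) ≤ W 1 n f)} ∪
      ⋃ x : ℤ, {f | ∀ n, Alive n x f} := by
    intro f _
    by_cases hg : (∀ n, ∃ k : ℕ, step^[n] f (k : ℤ) = 0) ∧
      (∀ n, W (-1) n f ≤ (14 : ℕ)) ∧ ∀ n, -((14 : ℕ) : ℤ) ≤ W 1 n f
    · right
      obtain ⟨x, _, hx⟩ := survive 14 f hg.1 hg.2.1 hg.2.2
      exact Set.mem_iUnion.2 ⟨x, hx⟩
    · exact Or.inl hg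
  have := (measure_mono (μ := ν) huniv).trans (measure_union_le _ _)
  rw [hU, add_zero, measure_univ] at this
  exact absurd (bad_small h) (not_lt.2 this)

/-! ### Transfer to the given probability space -/

lemma nullMeasurableSet_of_add {Ω : Type*} [MeasurableSpace Ω] (μ : Measure Ω)
    [IsProbabilityMeasure μ] (A : Set Ω) (h : μ A + μ Aᶜ = 1) : NullMeasurableSet A μ := by
  have hB := measurableSet_toMeasurable μ A
  have hC := measurableSet_toMeasurable μ Aᶜ
  have hun : toMeasurable μ A ∪ toMeasurable μ Aᶜ = Set.univ := by
    apply Set.eq_univ_of_univ_subset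
    rw [← Set.union_compl_self A]
    exact Set.union_subset_union (subset_toMeasurable _ _) (subset_toMeasurable _ _)
  have hadd := measure_union_add_inter (μ := μ) (toMeasurable μ A) hC
  rw [hun, measure_univ, measure_toMeasurable, measure_toMeasurable, h] at hadd
  have hinter : μ (toMeasurable μ A ∩ toMeasurable μ Aᶜ) = 0 := by
    have : (1 : ENNReal) + μ (toMeasurable μ A ∩ toMeasurable μ Aᶜ) = 1 + 0 := by
      rw [hadd, add_zero]
    exact (ENNReal.add_right_inj (by simp)).1 this
  refine hB.nullMeasurableSet.congr ?_
  rw [ae_eq_set]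
  constructor
  · refine measure_mono_null ?_ hinter
    intro x hx
    exact ⟨hx.1, subset_toMeasurable _ _ hx.2⟩
  · rw [Set.sdiff_eq_empty.2 (subset_toMeasurable _ _), measure_empty]

lemma aemeasurable_init {Ω : Type*} [MeasurableSpace Ω] (μ : Measure Ω)
    [IsProbabilityMeasure μ] (X : Ω → Config) (hX : IIDFairOn μ X Set.univ) :
    AEMeasurable X μ := by
  rw [aemeasurable_pi_iff]
  intro x
  have h : ∀ a : ZMod 2, μ {ω | X ω x = a} = 2⁻¹ := by
    intro a
    simpa using hX {x} (Set.subset_univ _) (fun _ => a)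
  have hc : {ω | X ω x = 0}ᶜ = {ω | X ω x = 1} := by
    ext ω
    rcases zmod_two (X ω x) with e | e <;> simp [e]
  have hA : NullMeasurableSet {ω | X ω x = 0} μ := by
    apply nullMeasurableSet_of_add
    rw [hc, h, h, ENNReal.inv_two_add_inv_two]
  classical
  obtain ⟨B, hB, hAB⟩ := hA
  refine ⟨fun ω => if ω ∈ B then 0 else 1, Measurable.ite hB measurable_const measurable_const, ?_⟩
  filter_upwards [hAB] with ω hω
  have hω' : (X ω x = 0) = (ω ∈ B) := hω
  rcases zmod_two (X ω x) with e | e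
  · rw [if_pos (hω'.mp e), e]
  · rw [if_neg, e]
    rw [← hω', e]
    decide

end EmptyPaths

theorem supercritical_empty_paths {Ω : Type*} [MeasurableSpace Ω]
    (μ : Measure Ω) [IsProbabilityMeasure μ] (init : Ω → Config)
    (hrand : IIDFairOn μ init Set.univ) :
    0 < μ {ω | ∃ π : ℕ → ℤ, π 0 = 0 ∧ (∀ i : ℕ, |π (i + 1) - π i| ≤ 1) ∧
        ∀ i : ℕ, evol (init ω) i (π i) = 0} := by
  have hm := EmptyPaths.aemeasurable_init μ init hrand
  have hprob := Measure.isProbabilityMeasure_map (μ := μ) hm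
  have hfair : EmptyPaths.Fair (μ.map init) := by
    intro S v
    rw [Measure.map_apply_of_aemeasurable hm (EmptyPaths.measurableSet_cyl S v)]
    exact hrand S (Set.subset_univ _) v
  have hpos := EmptyPaths.fair_pos hfair
  rw [Measure.map_apply_of_aemeasurable hm (EmptyPaths.measurableSet_forall_alive 0)] at hpos
  refine hpos.trans_le (measure_mono ?_)
  intro ω hω
  exact EmptyPaths.exists_path 0 (init ω) hω
end

section
/- Power law for the Xor rule: let μ be the cellular automaton on {0,1}^ℤ defined by μ_{t+1}(x) = μ_t(x-1) + μ_t(x+1) mod 2, with initial configuration equal to 1 on {-1, 0} and 0 elsewhere. Define the path (x_t) by x_0 = 0 and x_{t+1} = x_t if μ_t(x_t) = 1, x_{t+1} = x_t + 1 if μ_t(x_t) = 0. Then x_t = t − Θ(t^{log 2 / log 3}) as t → ∞; that is, there exist constants 0 < c_1 ≤ c_2 and T such that c_1 t^{log 2/log 3} ≤ t − x_t ≤ c_2 t^{log 2/log 3} for all t ≥ T. -/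
open MeasureTheory

/-- One step of the Xor rule. -/
def xstep (f : Config) : Config := fun x => f (x - 1) + f (x + 1)

/-- Evolution of the Xor rule. -/
def xevol (f : Config) (t : ℕ) : Config := xstep^[t] f

/-- Indicator of `{-1, 0}`. -/
def double : Config := fun x => if x = -1 ∨ x = 0 then 1 else 0

lemma xevol_succ (f : Config) (t : ℕ) (x : ℤ) :
    xevol f (t + 1) x = xevol f t (x - 1) + xevol f t (x + 1) := by
  unfold xevol
  rw [Function.iterate_succ_apply']
  rfl

lemma xevol_right (t : ℕ) : ∀ x : ℤ, (t : ℤ) < x → xevol double t x = 0 := by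
  induction t with
  | zero =>
    intro x hx
    have : ¬ (x = -1 ∨ x = 0) := by push_cast at hx; omega
    simp [xevol, double, this]
  | succ t ih =>
    intro x hx
    push_cast at hx
    rw [xevol_succ, ih _ (by omega), ih _ (by omega), add_zero]

lemma xevol_choose (t : ℕ) : ∀ d : ℕ,
    xevol double t ((t : ℤ) - d) = ((t.choose (d / 2) : ℕ) : ZMod 2) := by
  induction t with
  | zero =>
    intro d
    by_cases hd : d < 2
    · interval_cases d <;> simp [xevol, double]
    · have : ¬ ((d : ℤ) = 1 ∨ d = 0) := by omega
      have h2 : ¬ (-(d : ℤ) = -1 ∨ -(d : ℤ) = 0) := by omega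
      have h3 : 0 < d / 2 := by omega
      rw [Nat.choose_eq_zero_of_lt h3]
      simp only [xevol, double, Function.iterate_zero, id, Nat.cast_zero, zero_sub]
      rw [if_neg h2]
  | succ t ih =>
    intro d
    rw [xevol_succ]
    have e1 : ((t + 1 : ℕ) : ℤ) - d - 1 = (t : ℤ) - d := by push_cast; ring
    rw [e1, ih]
    by_cases hd : d < 2
    · rw [xevol_right t _ (by push_cast; omega)]
      have : d / 2 = 0 := by omega
      simp [this]
    · obtain ⟨e, rfl⟩ : ∃ e, d = e + 2 := ⟨d - 2, by omega⟩
      have e2 : ((t + 1 : ℕ) : ℤ) - ((e + 2 : ℕ) : ℤ) + 1 = (t : ℤ) - e := by push_cast; ring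
      have e3 : (e + 2) / 2 = e / 2 + 1 := by omega
      rw [e2, ih, e3, Nat.choose_succ_succ]
      push_cast
      ring

/-- The counting process with `k` hits per level. -/
def cnt (k : ℕ) : ℕ → ℕ
  | 0 => 0
  | t + 1 => if t.choose (cnt k t / k) % 2 = 1 then cnt k t + 1 else cnt k t

lemma lucas (n k : ℕ) :
    n.choose k % 2 = ((n % 2).choose (k % 2) * (n / 2).choose (k / 2)) % 2 := by
  have : Fact (Nat.Prime 2) := ⟨Nat.prime_two⟩
  exact Choose.choose_modEq_choose_mod_mul_choose_div_nat (p := 2) (n := n) (k := k)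

lemma ch00 (u j : ℕ) : (2 * u).choose (2 * j) % 2 = u.choose j % 2 := by
  rw [lucas]; simp

lemma ch01 (u j : ℕ) : (2 * u).choose (2 * j + 1) % 2 = 0 := by
  have h : (2 * j + 1) % 2 = 1 := by omega
  rw [lucas, h]; simp

lemma ch10 (u j : ℕ) : (2 * u + 1).choose (2 * j) % 2 = u.choose j % 2 := by
  have h : (2 * u + 1) % 2 = 1 := by omega
  have h2 : (2 * u + 1) / 2 = u := by omega
  rw [lucas, h, h2]; simp

lemma ch11 (u j : ℕ) : (2 * u + 1).choose (2 * j + 1) % 2 = u.choose j % 2 := by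
  have h : (2 * u + 1) % 2 = 1 := by omega
  have h2 : (2 * u + 1) / 2 = u := by omega
  have h3 : (2 * j + 1) % 2 = 1 := by omega
  have h4 : (2 * j + 1) / 2 = j := by omega
  rw [lucas, h, h2, h3, h4]; simp

lemma cnt_level (k j s : ℕ) (hs : s < k) (t c i : ℕ) (hc : c = j * k + s)
    (hi : i = j) : (t.choose (c / k)) = t.choose i := by
  subst hc hi
  have hk : 0 < k := by omega
  rw [mul_comm, Nat.mul_add_div hk, Nat.div_eq_of_lt hs, add_zero]

/-- Renormalization. -/
lemma cnt_renorm (k : ℕ) (hk : 2 ≤ k) (u : ℕ) :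
    ∀ j r : ℕ, r < 3 * k / 2 → cnt (3 * k / 2) u = j * (3 * k / 2) + r →
      cnt k (2 * u) = 2 * j * k + (r + min r ((k + 1) / 2)) := by
  have key : ∀ u : ℕ, ∃ j r : ℕ, r < 3 * k / 2 ∧ cnt (3 * k / 2) u = j * (3 * k / 2) + r ∧
      cnt k (2 * u) = 2 * j * k + (r + min r ((k + 1) / 2)) := by
    intro u
    induction u with
    | zero => exact ⟨0, 0, by omega, by simp [cnt], by simp [cnt]⟩
    | succ u ih =>
      obtain ⟨j, r, hr, h1, h2⟩ := ih
      have hA : cnt (3 * k / 2) (u + 1) =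
          if u.choose j % 2 = 1 then j * (3 * k / 2) + r + 1 else j * (3 * k / 2) + r := by
        rw [cnt, cnt_level (3 * k / 2) j r hr u _ j h1 rfl, h1]
      have hB : cnt k (2 * (u + 1)) = if u.choose j % 2 = 1 then
          2 * j * k + ((r + 1) + min (r + 1) ((k + 1) / 2)) else cnt k (2 * u) := by
        have e : 2 * (u + 1) = (2 * u + 1) + 1 := by ring
        rw [e]
        have hj : (2 * j + 1) * k = 2 * j * k + k := by ring
        by_cases hg : 2 * r < k
        · have hs : cnt k (2 * u + 1) =
              if u.choose j % 2 = 1 then cnt k (2 * u) + 1 else cnt k (2 * u) := by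
            rw [cnt, cnt_level k (2 * j) (2 * r) hg (2 * u) _ (2 * j) (by rw [h2]; omega) rfl,
              ch00]
          rw [cnt]
          by_cases hu : u.choose j % 2 = 1
          · rw [if_pos hu] at hs ⊢
            by_cases hg2 : 2 * r + 1 < k
            · rw [cnt_level k (2 * j) (2 * r + 1) hg2 (2 * u + 1) _ (2 * j)
                (by rw [hs, h2]; omega) rfl, ch10, if_pos hu, hs, h2]
              omega
            · rw [cnt_level k (2 * j + 1) 0 (by omega) (2 * u + 1) _ (2 * j + 1)
                (by rw [hs, h2, hj]; omega) rfl, ch11, if_pos hu, hs, h2]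
              omega
          · rw [if_neg hu] at hs ⊢
            rw [cnt_level k (2 * j) (2 * r) hg (2 * u + 1) _ (2 * j)
                (by rw [hs, h2]; omega) rfl, ch10, if_neg hu, hs]
        · have hlt : r + (k + 1) / 2 - k < k := by omega
          have hs : cnt k (2 * u + 1) = cnt k (2 * u) := by
            rw [cnt, cnt_level k (2 * j + 1) (r + (k + 1) / 2 - k) hlt (2 * u) _ (2 * j + 1)
              (by rw [h2, hj]; omega) rfl, ch01]
            simp
          rw [cnt, cnt_level k (2 * j + 1) (r + (k + 1) / 2 - k) hlt (2 * u + 1) _ (2 * j + 1)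
              (by rw [hs, h2, hj]; omega) rfl, ch11, hs, h2]
          split_ifs <;> omega
      by_cases hu : u.choose j % 2 = 1
      · rw [if_pos hu] at hA hB
        by_cases hr2 : r + 1 < 3 * k / 2
        · exact ⟨j, r + 1, hr2, by rw [hA]; ring, hB⟩
        · refine ⟨j + 1, 0, by omega, ?_, ?_⟩
          · rw [hA, Nat.add_mul]; omega
          · have hj : 2 * (j + 1) * k = 2 * j * k + 2 * k := by ring
            rw [hB, hj]; omega
      · rw [if_neg hu] at hA hB
        exact ⟨j, r, hr, hA, by rw [hB, h2]⟩
  intro j r hr h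
  obtain ⟨j', r', hr', h', h2⟩ := key u
  have hpos : 0 < 3 * k / 2 := by omega
  have ej : j = j' := by
    have a1 : (j * (3 * k / 2) + r) / (3 * k / 2) = j := by
      rw [mul_comm, Nat.mul_add_div hpos, Nat.div_eq_of_lt hr, add_zero]
    have a2 : (j' * (3 * k / 2) + r') / (3 * k / 2) = j' := by
      rw [mul_comm, Nat.mul_add_div hpos, Nat.div_eq_of_lt hr', add_zero]
    rw [← a1, ← a2, ← h, ← h']
  subst ej
  have er : r = r' := by omega
  subst er
  exact h2

lemma cnt_small (k : ℕ) : ∀ t : ℕ, t ≤ k → cnt k t = t := by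
  intro t
  induction t with
  | zero => intro _; rfl
  | succ t ih =>
    intro h
    rw [cnt, ih (by omega), Nat.div_eq_of_lt (by omega)]
    simp

/-- Iterated multiplicities. -/
def mult : ℕ → ℕ → ℕ
  | 0, k => k
  | n + 1, k => mult n (3 * k / 2)

lemma cnt_pow (n : ℕ) : ∀ k, 2 ≤ k → cnt k (2 ^ n * mult n k) = 2 ^ n * k := by
  induction n with
  | zero => intro k _; simp [mult, cnt_small]
  | succ n ih =>
    intro k hk
    have h := cnt_renorm k hk (2 ^ n * mult n (3 * k / 2)) (2 ^ n) 0 (by omega)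
      (by rw [ih _ (by omega), add_zero])
    have e : 2 ^ (n + 1) * mult (n + 1) k = 2 * (2 ^ n * mult n (3 * k / 2)) := by
      rw [mult]; ring
    rw [e, h, Nat.zero_min, pow_succ]
    ring

lemma mult_bound (n : ℕ) : ∀ k, 2 ≤ k →
    3 ^ n * (k - 1) ≤ 2 ^ n * mult n k ∧ 2 ^ n * mult n k ≤ 3 ^ n * k := by
  induction n with
  | zero => intro k _; simp [mult]
  | succ n ih =>
    intro k hk
    obtain ⟨h1, h2⟩ := ih (3 * k / 2) (by omega)
    have a : 3 * (k - 1) ≤ 2 * (3 * k / 2 - 1) := by omega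
    have b : 2 * (3 * k / 2) ≤ 3 * k := by omega
    have a' := Nat.mul_le_mul_left (3 ^ n) a
    have b' := Nat.mul_le_mul_left (3 ^ n) b
    rw [mult, pow_succ, pow_succ]
    constructor <;> nlinarith

lemma cnt_mono (k : ℕ) : Monotone (cnt k) := by
  apply monotone_nat_of_le_succ
  intro t
  rw [cnt]
  split_ifs <;> omega

lemma cnt_upper (n t : ℕ) (h : t < 3 ^ n) : cnt 2 t ≤ 2 ^ (n + 1) := by
  have h1 := (mult_bound n 2 le_rfl).1
  have h2 := cnt_mono 2 (show t ≤ 2 ^ n * mult n 2 by omega)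
  rw [cnt_pow n 2 le_rfl] at h2
  rw [pow_succ]; exact h2

lemma cnt_lower (n t : ℕ) (h : 3 ^ (n + 1) ≤ t) : 2 ^ (n + 1) ≤ cnt 2 t := by
  have h1 := (mult_bound n 2 le_rfl).2
  rw [pow_succ] at h
  have h2 := cnt_mono 2 (show 2 ^ n * mult n 2 ≤ t by omega)
  rw [cnt_pow n 2 le_rfl] at h2
  rw [pow_succ]; exact h2

lemma three_rpow (n : ℕ) : (((3 : ℝ) ^ n) ^ (Real.log 2 / Real.log 3)) = 2 ^ n := by
  have h : (3 : ℝ) ^ (Real.log 2 / Real.log 3) = 2 := by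
    have h3 : Real.log 3 ≠ 0 := (Real.log_pos (by norm_num)).ne'
    rw [Real.rpow_def_of_pos (by norm_num), mul_div_cancel₀ _ h3, Real.exp_log (by norm_num)]
  rw [← Real.rpow_natCast, ← Real.rpow_mul (by norm_num), mul_comm, Real.rpow_mul (by norm_num),
    h, Real.rpow_natCast]

theorem power_law_for_xor (xs : ℕ → ℤ) (h0 : xs 0 = 0)
    (hrec : ∀ t : ℕ, xs (t + 1) = if xevol double t (xs t) = 1 then xs t else xs t + 1) :
    ∃ c1 c2 : ℝ, ∃ T : ℕ, 0 < c1 ∧ c1 ≤ c2 ∧ ∀ t : ℕ, T ≤ t →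
      c1 * (t : ℝ) ^ (Real.log 2 / Real.log 3) ≤ (t : ℝ) - (xs t : ℝ) ∧
      (t : ℝ) - (xs t : ℝ) ≤ c2 * (t : ℝ) ^ (Real.log 2 / Real.log 3) := by
  have hx : ∀ t : ℕ, xs t = (t : ℤ) - (cnt 2 t : ℕ) := by
    intro t
    induction t with
    | zero => simp [h0, cnt]
    | succ t ih =>
      rw [hrec, ih, xevol_choose, cnt]
      have hiff : (((t.choose (cnt 2 t / 2) : ℕ) : ZMod 2) = 1) ↔
          t.choose (cnt 2 t / 2) % 2 = 1 := by
        rw [ZMod.natCast_eq_one_iff_odd, Nat.odd_iff]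
      by_cases h : t.choose (cnt 2 t / 2) % 2 = 1
      · rw [if_pos h, if_pos (hiff.2 h)]; push_cast; ring
      · rw [if_neg h, if_neg (fun h' => h (hiff.1 h'))]; push_cast; ring
  have hα : 0 ≤ Real.log 2 / Real.log 3 :=
    div_nonneg (Real.log_nonneg (by norm_num)) (Real.log_nonneg (by norm_num))
  refine ⟨1 / 2, 4, 3, by norm_num, by norm_num, ?_⟩
  intro t ht
  have e : (t : ℝ) - (xs t : ℝ) = (cnt 2 t : ℝ) := by rw [hx]; push_cast; ring
  rw [e]
  obtain ⟨n, hn1, hn2⟩ : ∃ n, 3 ^ (n + 1) ≤ t ∧ t < 3 ^ (n + 2) := by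
    have hp : 1 ≤ Nat.log 3 t := Nat.log_pos (by norm_num) ht
    refine ⟨Nat.log 3 t - 1, ?_, ?_⟩
    · rw [Nat.sub_add_cancel hp]; exact Nat.pow_log_le_self 3 (by omega)
    · have : Nat.log 3 t - 1 + 2 = (Nat.log 3 t).succ := by omega
      rw [this]; exact Nat.lt_pow_succ_log_self (by norm_num) t
  have l := cnt_lower n t hn1
  have u := cnt_upper (n + 2) t hn2
  have l' : (2 : ℝ) ^ (n + 1) ≤ (cnt 2 t : ℝ) := by exact_mod_cast l
  have u' : (cnt 2 t : ℝ) ≤ (2 : ℝ) ^ (n + 2 + 1) := by exact_mod_cast u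
  have r1 : (2 : ℝ) ^ (n + 1) ≤ (t : ℝ) ^ (Real.log 2 / Real.log 3) := by
    rw [← three_rpow]
    exact Real.rpow_le_rpow (by positivity) (by exact_mod_cast hn1) hα
  have r2 : (t : ℝ) ^ (Real.log 2 / Real.log 3) ≤ (2 : ℝ) ^ (n + 2) := by
    rw [← three_rpow]
    exact Real.rpow_le_rpow (by positivity) (by exact_mod_cast hn2.le) hα
  have p1 : (2 : ℝ) ^ (n + 2) = 2 * 2 ^ (n + 1) := by ring
  have p2 : (2 : ℝ) ^ (n + 2 + 1) = 4 * 2 ^ (n + 1) := by ring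
  constructor <;> linarith
end
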